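/- arXiv:2603.25392 — 3 statements merged into one kernel-verified Lean document; each statement's English description precedes it below -/
import Mathlib

section
/- Let B_n^{(k)} denote the poly-Bernoulli numbers, defined by Σ_{n≥0} B_n^{(k)} x^n/n! = Li_k(1−e^{−x})/(1−e^{−x}) where Li_k(z) = Σ_{m≥1} z^m/m^k (for k ≤ 0 this is a rational function). Let p_n be Lehmer's polynomials (p_{−1}=0, q_{−1}=1, with recurrences p_{n+1}(x) = 2(nx+1)p_n(x)+2x(1−x)p_n'(x)+q_n(x), q_{n+1}(x) = (2(n+1)x+1)q_n(x)+2x(1−x)q_n'(x)). Then for every integer n ≥ 0: (1/3)·(2/3)^n·p_n(1/4) = (1/3)·Σ_{k=0}^n B_{n−k}^{(−k)}. -/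
open Polynomial

/-- Lehmer's polynomials `q_n` for `n ≥ -1`, indexed so that `lehmerQ (n+1) = q_n`
(`lehmerQ 0 = q_{-1} = 1`), with recurrence
`q_{n+1}(x) = (2(n+1)x + 1) q_n(x) + 2x(1-x) q_n'(x)`. -/
noncomputable def lehmerQ : ℕ → Polynomial ℤ
  | 0 => 1
  | (k + 1) => (C (2 * (k : ℤ)) * X + 1) * lehmerQ k
      + 2 * X * (1 - X) * derivative (lehmerQ k)

/-- Lehmer's polynomials `p_n` for `n ≥ -1`, indexed so that `lehmerP (n+1) = p_n`
(`lehmerP 0 = p_{-1} = 0`), with recurrence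
`p_{n+1}(x) = 2(nx + 1) p_n(x) + 2x(1-x) p_n'(x) + q_n(x)`. -/
noncomputable def lehmerP : ℕ → Polynomial ℤ
  | 0 => 0
  | (k + 1) => 2 * (C ((k : ℤ) - 1) * X + 1) * lehmerP k
      + 2 * X * (1 - X) * derivative (lehmerP k) + lehmerQ k

/-- The polylogarithm `Li_{-k}(z)` of nonpositive integer order, as a rational function:
`Li_0(z) = z/(1-z)` and `Li_{-(k+1)}(z) = z · d/dz Li_{-k}(z)`. -/
noncomputable def negPolylog : ℕ → ℝ → ℝ
  | 0, z => z / (1 - z)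
  | (k + 1), z => z * deriv (negPolylog k) z

/-- The poly-Bernoulli number `B_n^{(-k)}` with nonpositive index `-k`, defined as the `n`-th
Taylor coefficient (times `n!`) of `x ↦ Li_{-k}(1-e^{-x})/(1-e^{-x})` at `x = 0`
(with the removable singularity at `0` filled in by its limit value `1`). -/
noncomputable def polyBernoulli (n k : ℕ) : ℝ :=
  iteratedDeriv n
    (fun x : ℝ => if x = 0 then 1 else
      negPolylog k (1 - Real.exp (-x)) / (1 - Real.exp (-x))) 0

/-! Write egf for exponential generating function. Let `p(z, X)` be the egf of the `lehmerP m`, and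
`h(z, u)` that of polynomials in `u` which at `u = 1` become the antidiagonal sums of the
poly-Bernoulli numbers. For fixed `X` and `u` both satisfy a linear differential equation in `z`; at
`X = 1/4` and `u = 1` these are
`(1 - e^(3z/2) / 4) p' = (3/4) (p + e^(3z/2))` and `(4 - e^z) h' = 2 h + 3 e^z`.
The substitution `p(z) = (2/3) h(3z/2)` takes one into the other, and `p(0) = h(0) = 0`.

Each equation holds because the difference of its two sides vanishes at `z = 0`, and the
first-order operator in `z` and `X` (or `u`) that expresses the defining recurrence maps this
difference to a multiple of itself. For `p` this needs the analogous equation for `lehmerQ`,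
since the recurrence for `lehmerP` is inhomogeneous. -/

section BinomialTransform

open Finset

variable {R S : Type*} [CommRing R] [CommRing S]

/-- The binomial transform `f ↦ ∑ i + j = n, n.choose i * c ^ i * f j`. On egfs it is multiplication
by `e^(cz)`, while the shift `j ↦ f (j + 1)` is differentiation. -/
def binomialTransform (c : R) (n : ℕ) : (ℕ → R) →ₗ[R] R :=
  ∑ p ∈ antidiagonal n, n.choose p.1 • c ^ p.1 • LinearMap.proj p.2

theorem binomialTransform_apply (c : R) (n : ℕ) (f : ℕ → R) :
    binomialTransform c n f = ∑ p ∈ antidiagonal n, n.choose p.1 • (c ^ p.1 * f p.2) := by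
  simp [binomialTransform, -nsmul_eq_mul]

theorem binomialTransform_zero (c : R) (f : ℕ → R) : binomialTransform c 0 f = f 0 := by
  simp [binomialTransform_apply]

theorem binomialTransform_succ (c : R) (n : ℕ) (f : ℕ → R) :
    binomialTransform c (n + 1) f =
      c * binomialTransform c n f + binomialTransform c n fun j ↦ f (j + 1) := by
  simp only [binomialTransform_apply]
  rw [sum_antidiagonal_choose_succ_nsmul (fun i j ↦ c ^ i * f j), add_comm, mul_sum]
  congr 1
  refine sum_congr rfl fun p hp ↦ ?_
  rw [← Nat.choose_symm_of_eq_add (mem_antidiagonal.mp hp).symm, mul_smul_comm, pow_succ',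
    mul_assoc]

theorem map_binomialTransform {F : Type*} [FunLike F R S] [AddMonoidHomClass F R S] (φ : F)
    {c : R} {d : S} {n : ℕ} {f : ℕ → R} {g : ℕ → S}
    (h : ∀ i j, i + j = n → φ (c ^ i * f j) = d ^ i * g j) :
    φ (binomialTransform c n f) = binomialTransform d n g := by
  simp only [binomialTransform_apply, map_sum, map_nsmul]
  exact sum_congr rfl fun p hp ↦ by rw [h p.1 p.2 (mem_antidiagonal.mp hp)]

theorem map_binomialTransform_one {F : Type*} [FunLike F R S] [AddMonoidHomClass F R S] (φ : F)
    (n : ℕ) (f : ℕ → R) :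
    φ (binomialTransform 1 n f) = binomialTransform 1 n fun j ↦ φ (f j) :=
  map_binomialTransform φ fun i j _ ↦ by simp only [one_pow, one_mul]

theorem binomialTransform_pow_mul (c : R) (n : ℕ) (f : ℕ → R) :
    binomialTransform c n (fun j ↦ c ^ j * f j) = c ^ n * binomialTransform 1 n f :=
  .symm <| map_binomialTransform (AddMonoidHom.mulLeft (c ^ n)) fun i j hij ↦ by
    simp [← hij, pow_add, mul_assoc]

theorem binomialTransform_eq_self_of_forall_lt {c : R} {n : ℕ} {f : ℕ → R}
    (hf : ∀ j < n, f j = 0) : binomialTransform c n f = f n := by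
  rw [binomialTransform_apply, sum_eq_single (0, n)]
  · simp
  · rintro ⟨i, j⟩ hij hne
    have hj : j < n := by grind [HasAntidiagonal.mem_antidiagonal]
    simp [hf j hj]
  · simp

theorem eq_of_binomialTransform_recurrence [NoZeroDivisors R] {c r s : R} (hr : r ≠ 1)
    {t u v : ℕ → R} (h0 : u 0 = v 0)
    (hu : ∀ m, u (m + 1) - r * binomialTransform c m (fun j ↦ u (j + 1)) = s * u m + t m)
    (hv : ∀ m, v (m + 1) - r * binomialTransform c m (fun j ↦ v (j + 1)) = s * v m + t m) :
    u = v := by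
  funext m
  induction m using Nat.strong_induction_on with
  | _ m ih =>
    cases m with
    | zero => exact h0
    | succ m =>
      have htop := binomialTransform_eq_self_of_forall_lt (c := c)
        (f := (fun j ↦ u (j + 1)) - fun j ↦ v (j + 1))
        (n := m) fun j hj ↦ sub_eq_zero.mpr (ih (j + 1) (by omega))
      rw [map_sub, Pi.sub_apply] at htop
      have hprod : (1 - r) * (u (m + 1) - v (m + 1)) = 0 := by
        linear_combination hu m - hv m + s * ih m (by omega) + r * htop
      exact sub_eq_zero.mp ((mul_eq_zero.mp hprod).resolve_left (sub_ne_zero.mpr hr.symm))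

end BinomialTransform

section Lehmer

variable {R : Type*} [CommRing R]

/-- The derivation `2X(1 - X) d/dX` conjugated by `(1 - X) ^ a`, i.e. its action on polynomials of
weight `a`, where `1 - X` has weight `1`. -/
noncomputable def weightedDeriv (a : ℤ) : R[X] →ₗ[R] R[X] :=
  LinearMap.mulLeft R (2 * (a : R[X]) * X) + LinearMap.mulLeft R (2 * X * (1 - X)) ∘ₗ derivative

theorem weightedDeriv_apply (a : ℤ) (f : R[X]) :
    weightedDeriv a f = 2 * (a : R[X]) * X * f + 2 * X * (1 - X) * derivative f := rfl

theorem weightedDeriv_X_mul (a : ℤ) (f : R[X]) :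
    weightedDeriv a (X * f) = X * weightedDeriv a f + 2 * X * (1 - X) * f := by
  simp only [weightedDeriv_apply, derivative_mul, derivative_X]
  ring

theorem weightedDeriv_one_sub_X_mul (a : ℤ) (f : R[X]) :
    weightedDeriv (a + 1) ((1 - X) * f) = (1 - X) * weightedDeriv a f := by
  simp only [weightedDeriv_apply, derivative_mul, derivative_sub, derivative_X, derivative_one,
    Int.cast_add, Int.cast_one]
  ring

theorem weightedDeriv_pow_mul (n : ℕ) (a : ℤ) (f : R[X]) :
    weightedDeriv (n + a) ((2 * (1 - X)) ^ n * f) = (2 * (1 - X)) ^ n * weightedDeriv a f := by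
  induction n with
  | zero => simp
  | succ n ih =>
    have hsplit (g : R[X]) :
        (2 * (1 - X)) ^ (n + 1) * g = (1 - X) * ((2 : R) • ((2 * (1 - X)) ^ n * g)) := by
      rw [smul_eq_C_mul, C_ofNat]
      ring
    rw [hsplit, hsplit, Nat.cast_succ, add_right_comm, weightedDeriv_one_sub_X_mul, map_smul, ih]

theorem weightedDeriv_binomialTransform (n : ℕ) (a : ℤ) (f : ℕ → R[X]) :
    weightedDeriv (n + a) (binomialTransform (2 * (1 - X)) n f) =
      binomialTransform (2 * (1 - X)) n fun j ↦ weightedDeriv (j + a) (f j) :=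
  map_binomialTransform _ fun i j hij ↦ by
    rw [← hij, Nat.cast_add, add_assoc, weightedDeriv_pow_mul]

theorem lehmerQ_succ (k : ℕ) : lehmerQ (k + 1) = weightedDeriv k (lehmerQ k) + lehmerQ k := by
  simp only [lehmerQ, weightedDeriv_apply, map_mul, map_natCast, map_ofNat, Int.cast_natCast]
  ring

theorem lehmerP_succ (k : ℕ) :
    lehmerP (k + 1) = weightedDeriv (k - 1) (lehmerP k) + 2 * lehmerP k + lehmerQ k := by
  simp only [lehmerP, weightedDeriv_apply, map_sub, map_natCast, map_one, Int.cast_sub,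
    Int.cast_natCast, Int.cast_one]
  ring

theorem weightedDeriv_lehmerQ_succ (k : ℕ) :
    weightedDeriv (k + 1) (lehmerQ (k + 1)) = lehmerQ (k + 2) - lehmerQ (k + 1) := by
  rw [lehmerQ_succ (k + 1), Nat.cast_succ, add_sub_cancel_right]

theorem weightedDeriv_lehmerP_succ (k : ℕ) :
    weightedDeriv k (lehmerP (k + 1)) =
      lehmerP (k + 2) - 2 * lehmerP (k + 1) - lehmerQ (k + 1) := by
  rw [lehmerP_succ (k + 1), Nat.cast_succ, add_sub_cancel_right]
  ring

theorem lehmerQ_succ_sub_binomialTransform (m : ℕ) :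
    lehmerQ (m + 1) - X * binomialTransform (2 * (1 - X)) m (fun j ↦ lehmerQ (j + 1)) =
      (1 - X) * lehmerQ m := by
  induction m with
  | zero => simp [binomialTransform_zero, lehmerQ]
  | succ m ih =>
    have hsub : (fun j ↦ lehmerQ (j + 2) - lehmerQ (j + 1)) =
        (fun j ↦ lehmerQ (j + 2)) - fun j ↦ lehmerQ (j + 1) := rfl
    have hderiv := congrArg (weightedDeriv (m + 1)) ih
    rw [map_sub, weightedDeriv_X_mul, weightedDeriv_one_sub_X_mul, weightedDeriv_binomialTransform,
      funext weightedDeriv_lehmerQ_succ, hsub, map_sub, weightedDeriv_lehmerQ_succ] at hderiv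
    rw [binomialTransform_succ]
    linear_combination hderiv - (1 - X) * lehmerQ_succ m + ih

theorem lehmerP_succ_sub_binomialTransform (m : ℕ) :
    lehmerP (m + 1) - X * binomialTransform (2 * (1 - X)) m (fun j ↦ lehmerP (j + 1)) =
      (1 - X) * (lehmerP m + (2 * (1 - X)) ^ m) := by
  induction m with
  | zero => simp [binomialTransform_zero, lehmerP, lehmerQ]
  | succ m ih =>
    have hsub : (fun j ↦ lehmerP (j + 2) - 2 * lehmerP (j + 1) - lehmerQ (j + 1)) =
        (fun j ↦ lehmerP (j + 2)) - (2 : ℤ[X]) • (fun j ↦ lehmerP (j + 1))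
          - fun j ↦ lehmerQ (j + 1) := rfl
    have hE := weightedDeriv_binomialTransform m 0 fun j ↦ lehmerP (j + 1)
    simp only [add_zero, weightedDeriv_lehmerP_succ] at hE
    rw [hsub, map_sub, map_sub, map_smul, smul_eq_mul] at hE
    have hpow : weightedDeriv (m - 1) ((2 * (1 - X)) ^ m : ℤ[X]) =
        (2 * (1 - X)) ^ m * (-2 * X) := by
      simpa [weightedDeriv_apply, ← sub_eq_add_neg] using weightedDeriv_pow_mul m (-1) (1 : ℤ[X])
    have hright := weightedDeriv_one_sub_X_mul (m - 1) (lehmerP m + (2 * (1 - X)) ^ m)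
    rw [sub_add_cancel, map_add, hpow] at hright
    have hderiv := congrArg (weightedDeriv m) ih
    rw [map_sub, weightedDeriv_X_mul, hE, hright, weightedDeriv_lehmerP_succ] at hderiv
    rw [binomialTransform_succ]
    linear_combination hderiv - (1 - X) * lehmerP_succ m + 2 * ih
      + lehmerQ_succ_sub_binomialTransform m

theorem aeval_quarter_lehmerP_recurrence (m : ℕ) :
    aeval (1 / 4 : ℝ) (lehmerP (m + 1))
        - 1 / 4 * binomialTransform (3 / 2) m (fun j ↦ aeval (1 / 4 : ℝ) (lehmerP (j + 1))) =
      3 / 4 * aeval (1 / 4 : ℝ) (lehmerP m) + 3 / 4 * (3 / 2) ^ m := by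
  have hX : aeval (1 / 4 : ℝ) (1 - X : ℤ[X]) = 3 / 4 := by
    rw [map_sub, map_one, aeval_X]
    norm_num
  have hc : aeval (1 / 4 : ℝ) (2 * (1 - X) : ℤ[X]) = 3 / 2 := by
    rw [map_mul, hX, map_ofNat]
    norm_num
  have hE : aeval (1 / 4 : ℝ)
        (binomialTransform (2 * (1 - X) : ℤ[X]) m fun j ↦ lehmerP (j + 1)) =
      binomialTransform (3 / 2) m fun j ↦ aeval (1 / 4 : ℝ) (lehmerP (j + 1)) :=
    map_binomialTransform _ fun i j _ ↦ by rw [map_mul, map_pow, hc]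
  have h := congrArg (aeval (1 / 4 : ℝ)) (lehmerP_succ_sub_binomialTransform m)
  rw [map_sub, map_mul, map_mul, map_add, map_pow, hX, aeval_X, hc, hE] at h
  linear_combination h

end Lehmer

section NegPolylogPoly

/-- The Euler operator `X d/dX`, which is `d/dx` in the variable `X = e^x`. -/
noncomputable def eulerOp (R : Type*) [CommRing R] : Derivation R R[X] R[X] :=
  (X : R[X]) • derivative'

theorem eulerOp_apply {R : Type*} [CommRing R] (f : R[X]) : eulerOp R f = X * derivative f := rfl

theorem eulerOp_X {R : Type*} [CommRing R] : eulerOp R X = X := by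
  rw [eulerOp_apply, derivative_X, mul_one]

theorem eulerOp_ofNat {R : Type*} [CommRing R] (n : ℕ) [n.AtLeastTwo] :
    eulerOp R ofNat(n) = 0 :=
  Derivation.map_natCast _ n

theorem iteratedDeriv_aeval_exp {R : Type*} [CommRing R] [Algebra R ℝ] (n : ℕ) (f : R[X]) :
    iteratedDeriv n (fun x : ℝ ↦ aeval (Real.exp x) f) =
      fun x ↦ aeval (Real.exp x) ((eulerOp R)^[n] f) := by
  induction n generalizing f with
  | zero => simp
  | succ n ih =>
    have hderiv : deriv (fun x : ℝ ↦ aeval (Real.exp x) f) =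
        fun x ↦ aeval (Real.exp x) (eulerOp R f) := by
      funext x
      have hcomp := (f.hasDerivAt_aeval (Real.exp x)).comp x (Real.hasDerivAt_exp x)
      rw [Function.comp_def] at hcomp
      rw [hcomp.deriv, eulerOp_apply, map_mul, aeval_X, mul_comm]
    rw [iteratedDeriv_succ', hderiv, ih, Function.iterate_succ_apply]

/-- The operator `1 + X(X - 1) d/dX`. It takes `f` to `g` when `z g(w) = z d/dz (z f(w))`, where
`w = 1 / (1 - z)`. -/
noncomputable def polylogStep : ℤ[X] →ₗ[ℤ] ℤ[X] :=
  LinearMap.id + LinearMap.mulLeft ℤ (X - 1) ∘ₗ (eulerOp ℤ : ℤ[X] →ₗ[ℤ] ℤ[X])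

theorem polylogStep_apply (f : ℤ[X]) : polylogStep f = f + (X - 1) * eulerOp ℤ f := rfl

theorem polylogStep_eulerOp (f : ℤ[X]) :
    polylogStep (eulerOp ℤ f) = eulerOp ℤ (polylogStep f) - X * eulerOp ℤ f := by
  rw [polylogStep_apply, polylogStep_apply, map_add, Derivation.leibniz, map_sub, eulerOp_X,
    Derivation.map_one_eq_zero, smul_eq_mul, smul_eq_mul]
  ring

/-- The polynomial `f_k` with `Li_{-k}(z) = z f_k(1 / (1 - z))`. -/
noncomputable def negPolylogPoly : ℕ → ℤ[X]
  | 0 => X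
  | k + 1 => polylogStep (negPolylogPoly k)

theorem polylogStep_negPolylogPoly (k : ℕ) :
    polylogStep (negPolylogPoly k) = negPolylogPoly (k + 1) := rfl

theorem negPolylogPoly_succ (k : ℕ) :
    negPolylogPoly (k + 1) = negPolylogPoly k + (X - 1) * eulerOp ℤ (negPolylogPoly k) := rfl

theorem aeval_one_negPolylogPoly (k : ℕ) : aeval (1 : ℝ) (negPolylogPoly k) = 1 := by
  induction k with
  | zero => simp [negPolylogPoly]
  | succ k ih => simp [negPolylogPoly_succ, ih]

theorem negPolylog_eq_mul_aeval (k : ℕ) {z : ℝ} (hz : z < 1) :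
    negPolylog k z = z * aeval (1 - z)⁻¹ (negPolylogPoly k) := by
  induction k generalizing z with
  | zero => simp [negPolylog, negPolylogPoly, div_eq_mul_inv]
  | succ k ih =>
    have hz' : 1 - z ≠ 0 := by linarith
    have hlocal : negPolylog k =ᶠ[nhds z] fun w ↦ w * aeval (1 - w)⁻¹ (negPolylogPoly k) := by
      filter_upwards [Iio_mem_nhds hz] with w hw using ih hw
    have hinv : HasDerivAt (fun w : ℝ ↦ (1 - w)⁻¹) (1 / (1 - z) ^ 2) z := by
      simpa using ((hasDerivAt_id z).const_sub 1).fun_inv hz'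
    have hderiv := (hasDerivAt_id' z).fun_mul
      (((negPolylogPoly k).hasDerivAt_aeval (1 - z)⁻¹).comp z hinv)
    simp only [Function.comp_apply] at hderiv
    rw [negPolylog, hlocal.deriv_eq, hderiv.deriv]
    simp only [negPolylogPoly_succ, eulerOp_apply, map_add, map_mul, map_sub, map_one,
      aeval_X]
    field_simp
    ring

theorem polyBernoulli_eq_aeval (n k : ℕ) :
    polyBernoulli n k = aeval (1 : ℝ) ((eulerOp ℤ)^[n] (negPolylogPoly k)) := by
  have hfun : (fun x : ℝ ↦ if x = 0 then 1 else
      negPolylog k (1 - Real.exp (-x)) / (1 - Real.exp (-x))) =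
      fun x ↦ aeval (Real.exp x) (negPolylogPoly k) := by
    funext x
    split_ifs with hx
    · rw [hx, Real.exp_zero, aeval_one_negPolylogPoly]
    · have hne : 1 - Real.exp (-x) ≠ 0 :=
        sub_ne_zero.mpr fun h ↦ hx (neg_eq_zero.mp (Real.exp_eq_one_iff _ |>.mp h.symm))
      rw [negPolylog_eq_mul_aeval k (by linarith [Real.exp_pos (-x)]), mul_div_cancel_left₀ _ hne,
        sub_sub_cancel, Real.exp_neg, inv_inv]
  simp only [polyBernoulli, hfun, iteratedDeriv_aeval_exp, Real.exp_zero]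

-- This is `e^y ∂f/∂y = ∂f/∂y + X ∂f/∂X - f` for the egf `f(X, y) = e^y X / (X + e^y - X e^y)` of
-- `negPolylogPoly`. At `X = e^x` it mirrors the recurrence `(e^x - 1) ∂f/∂x = ∂f/∂y - f` defining
-- `negPolylogPoly`, an instance of the duality `B_n^{(-k)} = B_k^{(-n)}`.
theorem binomialTransform_negPolylogPoly_succ (k : ℕ) :
    binomialTransform 1 k (fun j ↦ negPolylogPoly (j + 1)) =
      negPolylogPoly (k + 1) + eulerOp ℤ (negPolylogPoly k) - negPolylogPoly k := by
  induction k with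
  | zero => simp [binomialTransform_zero, negPolylogPoly, eulerOp_apply]
  | succ k ih =>
    have hshift : polylogStep (binomialTransform 1 k fun j ↦ negPolylogPoly (j + 1)) =
        binomialTransform 1 k fun j ↦ negPolylogPoly (j + 2) :=
      map_binomialTransform_one polylogStep k _
    rw [binomialTransform_succ, ← hshift, ih, map_sub, map_add, polylogStep_eulerOp]
    simp only [polylogStep_negPolylogPoly]
    linear_combination negPolylogPoly_succ k

end NegPolylogPoly

section Antidiagonal

/-- The polynomial `∑ n + k = m - 1, (X d/dX)^n f_k`, where `f_k` is `negPolylogPoly k`; at `X = 1`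
it is the sum of the `B_n^{(-k)}` over the antidiagonal `n + k = m - 1`. The offset makes the egf
`h` the solution of `h' = X ∂h/∂X + f`, `h(0) = 0`, where `f` is the egf of the `f_k`. -/
noncomputable def antidiagonalPoly : ℕ → ℤ[X]
  | 0 => 0
  | m + 1 => eulerOp ℤ (antidiagonalPoly m) + negPolylogPoly m

theorem antidiagonalPoly_succ (m : ℕ) :
    antidiagonalPoly (m + 1) = eulerOp ℤ (antidiagonalPoly m) + negPolylogPoly m := rfl

theorem antidiagonalPoly_succ_eq_sum (m : ℕ) :
    antidiagonalPoly (m + 1) =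
      ∑ k ∈ Finset.range (m + 1), (eulerOp ℤ)^[m - k] (negPolylogPoly k) := by
  induction m with
  | zero => simp [antidiagonalPoly]
  | succ m ih =>
    rw [antidiagonalPoly_succ, ih, map_sum, Finset.sum_range_succ _ (m + 1), Nat.sub_self,
      Function.iterate_zero_apply]
    congr 1
    refine Finset.sum_congr rfl fun k hk ↦ ?_
    rw [Nat.succ_sub (Finset.mem_range_succ_iff.mp hk), Function.iterate_succ_apply']

theorem aeval_one_antidiagonalPoly_succ (m : ℕ) :
    aeval (1 : ℝ) (antidiagonalPoly (m + 1)) =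
      ∑ k ∈ Finset.range (m + 1), polyBernoulli (m - k) k := by
  simp only [antidiagonalPoly_succ_eq_sum, map_sum, polyBernoulli_eq_aeval]

theorem binomialTransform_antidiagonalPoly_succ (m : ℕ) :
    8 * antidiagonalPoly (m + 1)
        - 2 * X * binomialTransform 1 m (fun j ↦ antidiagonalPoly (j + 1)) =
      4 * antidiagonalPoly m + 3 * X + (4 - X) * negPolylogPoly m
        + (1 - X) * binomialTransform 1 m negPolylogPoly := by
  induction m with
  | zero =>
    simp only [binomialTransform_zero, antidiagonalPoly, negPolylogPoly, map_zero]
    ring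
  | succ m ih =>
    have hsucc (j : ℕ) : eulerOp ℤ (antidiagonalPoly (j + 1)) =
        antidiagonalPoly (j + 2) - negPolylogPoly (j + 1) := by
      rw [antidiagonalPoly_succ (j + 1), add_sub_cancel_right]
    have hsub : (fun j ↦ antidiagonalPoly (j + 2) - negPolylogPoly (j + 1)) =
        (fun j ↦ antidiagonalPoly (j + 2)) - fun j ↦ negPolylogPoly (j + 1) := rfl
    have hEh := map_binomialTransform_one (eulerOp ℤ) m fun j ↦ antidiagonalPoly (j + 1)
    rw [funext hsucc, hsub, map_sub] at hEh
    have hEf : binomialTransform 1 m (fun j ↦ negPolylogPoly (j + 1)) =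
        polylogStep (binomialTransform 1 m negPolylogPoly) :=
      (map_binomialTransform_one polylogStep m negPolylogPoly).symm
    have hderiv := congrArg (eulerOp ℤ) ih
    simp only [map_sub, map_add, Derivation.leibniz, smul_eq_mul, eulerOp_X, eulerOp_ofNat,
      Derivation.map_one_eq_zero] at hderiv
    rw [binomialTransform_succ, binomialTransform_succ]
    rw [polylogStep_apply] at hEf
    linear_combination hderiv - 8 * hsucc m + 2 * X * hEh - 4 * antidiagonalPoly_succ m + hEf
      - (2 + X) * binomialTransform_negPolylogPoly_succ m + 2 * negPolylogPoly_succ m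

theorem aeval_one_antidiagonalPoly_recurrence (m : ℕ) :
    4 * aeval (1 : ℝ) (antidiagonalPoly (m + 1))
        - binomialTransform 1 m (fun j ↦ aeval (1 : ℝ) (antidiagonalPoly (j + 1))) =
      2 * aeval (1 : ℝ) (antidiagonalPoly m) + 3 := by
  have h := congrArg (aeval (1 : ℝ)) (binomialTransform_antidiagonalPoly_succ m)
  simp only [map_sub, map_add, map_mul, map_one, map_ofNat, aeval_X, aeval_one_negPolylogPoly,
    map_binomialTransform_one] at h
  linear_combination h / 2

end Antidiagonal

theorem aeval_quarter_lehmerP (m : ℕ) :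
    aeval (1 / 4 : ℝ) (lehmerP m) =
      2 / 3 * ((3 / 2) ^ m * aeval (1 : ℝ) (antidiagonalPoly m)) := by
  have hshift :
      (fun j ↦ 2 / 3 * ((3 / 2 : ℝ) ^ (j + 1) * aeval (1 : ℝ) (antidiagonalPoly (j + 1)))) =
        fun j ↦ (3 / 2) ^ j * aeval (1 : ℝ) (antidiagonalPoly (j + 1)) := by
    funext j
    ring
  refine congrFun (eq_of_binomialTransform_recurrence (u := fun m ↦ aeval (1 / 4 : ℝ) (lehmerP m))
    (v := fun m ↦ 2 / 3 * ((3 / 2) ^ m * aeval (1 : ℝ) (antidiagonalPoly m)))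
    (t := fun m ↦ 3 / 4 * (3 / 2) ^ m) (r := 1 / 4) (by norm_num) ?_
    aeval_quarter_lehmerP_recurrence fun m ↦ ?_) m
  · simp [lehmerP, antidiagonalPoly]
  · rw [hshift, binomialTransform_pow_mul]
    linear_combination (3 / 2) ^ m / 4 * aeval_one_antidiagonalPoly_recurrence m

theorem lehmerP_quarter_eq_polyBernoulli_sum (n : ℕ) :
    (1 / 3 : ℝ) * (2 / 3) ^ n * aeval ((1 : ℝ) / 4) (lehmerP (n + 1)) =
      1 / 3 * ∑ k ∈ Finset.range (n + 1), polyBernoulli (n - k) k := by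
  have hpow : (2 / 3 : ℝ) ^ n * (3 / 2) ^ n = 1 := by
    rw [← mul_pow]
    norm_num
  rw [aeval_quarter_lehmerP, aeval_one_antidiagonalPoly_succ, pow_succ]
  linear_combination (1 / 3 * ∑ k ∈ Finset.range (n + 1), polyBernoulli (n - k) k) * hpow
end

section
/- For 0 < σ < π and real s > 1, the shifted log-sine integral satisfies SLs(s;σ) = ζ_CB(s; sin(σ/2)) − (σ/π)·η_CB(s; sin(σ/2)). -/
/-!
Everything rests on one trigonometric series, `∑ Wₙ sinⁿ φ cos φ = π + 2 φ` for `|φ| < π / 2`,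
where `Wₙ = ∫₀^π sinⁿ` are the Wallis integrals: by their recursion the derivative of a partial sum
telescopes to `2` up to a geometrically small remainder. Comparing the values at `± θ / 2` shows
that the even part of the series is `π` and the odd part is `θ`.

Insert these two series into the integrals of `π U ^ (s - 2)` and `θ U ^ (s - 2)`, where
`U = -2 log (sin (θ / 2) / sin (σ / 2))`, and integrate termwise. Substituting `u = U` turns each
term into a Gamma integral. Since `Wₙ` is, up to a power of `2`, the reciprocal of
`x * binom(2x, x)` at `x = (n + 1) / 2`, the odd and the even terms sum to `ζ_CB` and `η_CB`.
-/

/-- The half-integer binomial coefficient `binom(2m+1, m+1/2) = Γ(2m+2)/Γ(m+3/2)²`. -/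
noncomputable def halfBinom (m : ℕ) : ℝ :=
  Real.Gamma (2 * m + 2) / (Real.Gamma ((m : ℝ) + 3 / 2)) ^ 2

open Filter MeasureTheory Real Set Topology

/-! ### The Wallis series -/

/-- The Wallis integral `Wₙ = ∫₀^π sinⁿ`, which supplies the coefficients of the sine series. -/
noncomputable def wallisIntegral (n : ℕ) : ℝ :=
  ∫ x in 0..π, sin x ^ n

theorem wallisIntegral_zero : wallisIntegral 0 = π := by
  simp [wallisIntegral]

theorem wallisIntegral_one : wallisIntegral 1 = 2 := by
  norm_num [wallisIntegral]

theorem wallisIntegral_add_two (n : ℕ) :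
    (n + 2) * wallisIntegral (n + 2) = (n + 1) * wallisIntegral n := by
  have hrec : wallisIntegral (n + 2) = (n + 1) / (n + 2) * wallisIntegral n := by
    simp [wallisIntegral, integral_sin_pow n]
  rw [hrec]
  field_simp

theorem abs_wallisIntegral_le_pi (n : ℕ) : |wallisIntegral n| ≤ π := by
  rw [wallisIntegral, abs_of_pos (integral_sin_pow_pos n)]
  simpa using integral_sin_pow_antitone (Nat.zero_le n)

theorem hasDerivAt_sin_pow_succ_mul_cos (n : ℕ) (x : ℝ) :
    HasDerivAt (fun y ↦ sin y ^ (n + 1) * cos y)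
      ((n + 1) * sin x ^ n - (n + 2) * sin x ^ (n + 2)) x := by
  refine (((hasDerivAt_sin x).pow (n + 1)).mul (hasDerivAt_cos x)).congr_deriv ?_
  simp only [Pi.pow_apply, Nat.add_sub_cancel]
  push_cast
  linear_combination ((n : ℝ) + 1) * sin x ^ n * cos_sq' x

theorem hasDerivAt_sum_wallisIntegral_mul_sin_pow_mul_cos (N : ℕ) (x : ℝ) :
    HasDerivAt (fun y ↦ ∑ n ∈ Finset.range (N + 2), wallisIntegral n * (sin y ^ n * cos y))
      (2 - ((N + 1) * wallisIntegral N * sin x ^ (N + 1)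
        + (N + 2) * wallisIntegral (N + 1) * sin x ^ (N + 2))) x := by
  induction N with
  | zero =>
    have h₀ := (hasDerivAt_cos x).const_mul π
    have h₁ := (hasDerivAt_sin_pow_succ_mul_cos 0 x).const_mul 2
    convert! h₀.add h₁ using 1
    · ext y
      simp [Finset.sum_range_succ, wallisIntegral_zero, wallisIntegral_one]
    · simp only [wallisIntegral_zero, wallisIntegral_one, zero_add, Nat.cast_zero, pow_zero,
        pow_one]
      ring
  | succ N ih =>
    have hlast := (hasDerivAt_sin_pow_succ_mul_cos (N + 1) x).const_mul (wallisIntegral (N + 2))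
    convert! ih.add hlast using 1
    · ext y
      simp [Finset.sum_range_succ _ (N + 2)]
    · push_cast
      linear_combination -sin x ^ (N + 1) * wallisIntegral_add_two N

theorem abs_sin_le_abs_sin {x y : ℝ} (hxy : |x| ≤ |y|) (hy : |y| ≤ π / 2) :
    |sin x| ≤ |sin y| := by
  rw [abs_sin_eq_sin_abs_of_abs_le_pi (by linarith [pi_pos]),
    abs_sin_eq_sin_abs_of_abs_le_pi (by linarith [pi_pos])]
  exact sin_le_sin_of_le_of_le_pi_div_two (by linarith [abs_nonneg x, pi_pos]) hy hxy

theorem abs_wallisIntegral_mul_pow_add_le {t : ℝ} (ht : |t| ≤ 1) (N : ℕ) :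
    |(N + 1) * wallisIntegral N * t ^ (N + 1) + (N + 2) * wallisIntegral (N + 1) * t ^ (N + 2)| ≤
      2 * π * (N + 2) * |t| ^ (N + 1) := by
  have hpow : |t| ^ (N + 2) ≤ |t| ^ (N + 1) := pow_le_pow_of_le_one (abs_nonneg t) ht (by lia)
  have hfirst : |(N + 1) * wallisIntegral N * t ^ (N + 1)| ≤ (N + 2) * π * |t| ^ (N + 1) := by
    rw [abs_mul, abs_mul, abs_pow, abs_of_nonneg (by positivity)]
    gcongr
    exacts [by norm_num, abs_wallisIntegral_le_pi N]
  have hsecond :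
      |(N + 2) * wallisIntegral (N + 1) * t ^ (N + 2)| ≤ (N + 2) * π * |t| ^ (N + 1) := by
    rw [abs_mul, abs_mul, abs_pow, abs_of_nonneg (by positivity)]
    gcongr
    exact abs_wallisIntegral_le_pi (N + 1)
  linarith [abs_add_le ((N + 1) * wallisIntegral N * t ^ (N + 1))
    ((N + 2) * wallisIntegral (N + 1) * t ^ (N + 2))]

theorem abs_sum_wallisIntegral_mul_sin_pow_mul_cos_sub_le {φ : ℝ} (hφ : |φ| ≤ π / 2) (N : ℕ) :
    |∑ n ∈ Finset.range (N + 2), wallisIntegral n * (sin φ ^ n * cos φ) - (π + 2 * φ)| ≤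
      2 * π * (N + 2) * |sin φ| ^ (N + 1) * |φ| := by
  set S : ℝ → ℝ := fun y ↦
    ∑ n ∈ Finset.range (N + 2), wallisIntegral n * (sin y ^ n * cos y) - 2 * y with hS
  have hS₀ : S 0 = π := by simp [hS, Finset.sum_range_succ', wallisIntegral_zero]
  have hderiv (x : ℝ) : HasDerivAt S (-((N + 1) * wallisIntegral N * sin x ^ (N + 1)
      + (N + 2) * wallisIntegral (N + 1) * sin x ^ (N + 2))) x :=
    ((hasDerivAt_sum_wallisIntegral_mul_sin_pow_mul_cos N x).sub
      ((hasDerivAt_id x).const_mul 2)).congr_deriv (by ring)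
  have hbound (x : ℝ) (hx : x ∈ uIcc 0 φ) : ‖-((N + 1) * wallisIntegral N * sin x ^ (N + 1)
      + (N + 2) * wallisIntegral (N + 1) * sin x ^ (N + 2))‖ ≤
      2 * π * (N + 2) * |sin φ| ^ (N + 1) := by
    have hsin : |sin x| ≤ |sin φ| :=
      abs_sin_le_abs_sin (by simpa using abs_sub_left_of_mem_uIcc hx) hφ
    rw [norm_neg, norm_eq_abs]
    exact (abs_wallisIntegral_mul_pow_add_le (abs_sin_le_one x) N).trans (by gcongr)
  have hmean := (convex_uIcc 0 φ).norm_image_sub_le_of_norm_hasDerivWithin_le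
    (fun x _ ↦ (hderiv x).hasDerivWithinAt) hbound left_mem_uIcc right_mem_uIcc
  rw [hS₀, sub_zero, norm_eq_abs, norm_eq_abs] at hmean
  convert! hmean using 2
  rw [hS]
  ring

theorem tendsto_add_two_mul_pow_succ {r : ℝ} (hr₀ : 0 ≤ r) (hr₁ : r < 1) :
    Tendsto (fun N : ℕ ↦ (N + 2) * r ^ (N + 1)) atTop (𝓝 0) := by
  have hlin := tendsto_self_mul_const_pow_of_lt_one hr₀ hr₁
  have hgeom := tendsto_pow_atTop_nhds_zero_of_lt_one hr₀ hr₁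
  convert! (hlin.add (hgeom.const_mul 2)).const_mul r using 2
  · ring
  · ring

theorem abs_sin_lt_one {φ : ℝ} (hφ : |φ| < π / 2) : |sin φ| < 1 := by
  have hcos : 0 < cos φ := cos_pos_of_mem_Ioo (abs_lt.1 hφ)
  rw [← sq_lt_one_iff_abs_lt_one, sin_sq]
  linarith [pow_pos hcos 2]

theorem summable_wallisIntegral_mul_pow {t : ℝ} (ht : |t| < 1) :
    Summable fun n ↦ wallisIntegral n * t ^ n := by
  refine ((summable_geometric_of_abs_lt_one ht).abs.mul_left π).of_norm_bounded fun n ↦ ?_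
  rw [norm_mul, norm_eq_abs, norm_eq_abs]
  gcongr
  exact abs_wallisIntegral_le_pi n

theorem hasSum_wallisIntegral_mul_sin_pow_mul_cos {φ : ℝ} (hφ : |φ| < π / 2) :
    HasSum (fun n ↦ wallisIntegral n * (sin φ ^ n * cos φ)) (π + 2 * φ) := by
  have hsin := abs_sin_lt_one hφ
  have hsummable : Summable fun n ↦ wallisIntegral n * (sin φ ^ n * cos φ) := by
    simpa only [mul_assoc] using (summable_wallisIntegral_mul_pow hsin).mul_right (cos φ)
  have hremainder :
      Tendsto (fun N : ℕ ↦ 2 * π * (N + 2) * |sin φ| ^ (N + 1) * |φ|) atTop (𝓝 0) := by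
    simpa [mul_assoc] using
      ((tendsto_add_two_mul_pow_succ (abs_nonneg _) hsin).const_mul (2 * π)).mul_const |φ|
  rw [hsummable.hasSum_iff_tendsto_nat, ← tendsto_add_atTop_iff_nat 2,
    tendsto_iff_norm_sub_tendsto_zero]
  exact squeeze_zero (fun _ ↦ norm_nonneg _)
    (abs_sum_wallisIntegral_mul_sin_pow_mul_cos_sub_le hφ.le) hremainder

theorem hasSum_even_and_odd_of_alternating {𝕜 : Type*} [NormedField 𝕜] [CompleteSpace 𝕜]
    [CharZero 𝕜] {f : ℕ → 𝕜} {a b : 𝕜} (ha : HasSum f a)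
    (hb : HasSum (fun n ↦ (-1) ^ n * f n) b) :
    HasSum (fun m ↦ f (2 * m)) ((a + b) / 2) ∧ HasSum (fun m ↦ f (2 * m + 1)) ((a - b) / 2) := by
  obtain ⟨e, he⟩ : Summable fun m ↦ f (2 * m) :=
    ha.summable.comp_injective (mul_right_injective₀ two_ne_zero)
  obtain ⟨o, ho⟩ : Summable fun m ↦ f (2 * m + 1) :=
    ha.summable.comp_injective ((add_left_injective 1).comp (mul_right_injective₀ two_ne_zero))
  have hadd : e + o = a := (he.even_add_odd ho).unique ha
  have hsub : e - o = b := by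
    rw [sub_eq_add_neg]
    refine HasSum.unique (HasSum.even_add_odd ?_ ?_) hb
    · simpa using he
    · simpa [pow_succ] using ho.neg
  rw [← hadd, ← hsub]
  exact ⟨by convert! he using 1; ring, by convert! ho using 1; ring⟩

theorem hasSum_wallisIntegral_even_and_odd {φ : ℝ} (hφ : |φ| < π / 2) :
    HasSum (fun m ↦ wallisIntegral (2 * m) * (sin φ ^ (2 * m) * cos φ)) π ∧
      HasSum (fun m ↦ wallisIntegral (2 * m + 1) * (sin φ ^ (2 * m + 1) * cos φ)) (2 * φ) := by
  have hneg := hasSum_wallisIntegral_mul_sin_pow_mul_cos (φ := -φ) (by rwa [abs_neg])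
  convert! hasSum_even_and_odd_of_alternating
    (hasSum_wallisIntegral_mul_sin_pow_mul_cos hφ) (b := π + 2 * -φ) ?_ using 2
  · ring
  · ring
  · convert! hneg using 2 with n
    rw [sin_neg, cos_neg, neg_pow (sin φ)]
    ring

/-! ### Central binomial coefficients with real argument -/

/-- The central binomial coefficient `binom(2x, x) = Γ(2x+1)/Γ(x+1)²` of a real number, extending
`Nat.centralBinom` and `halfBinom`. -/
noncomputable def realCentralBinom (x : ℝ) : ℝ :=
  Gamma (2 * x + 1) / Gamma (x + 1) ^ 2

theorem realCentralBinom_natCast (n : ℕ) : realCentralBinom n = n.centralBinom := by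
  have h := Nat.cast_add_choose ℝ (a := n) (b := n)
  rw [Nat.centralBinom, two_mul, h, realCentralBinom, Gamma_nat_eq_factorial,
    ← Gamma_nat_eq_factorial (n + n), sq]
  push_cast
  rw [two_mul]

theorem realCentralBinom_natCast_add_half (m : ℕ) : realCentralBinom (m + 1 / 2) = halfBinom m := by
  rw [realCentralBinom, halfBinom]
  ring_nf

theorem realCentralBinom_add_one {x : ℝ} (h₁ : x + 1 ≠ 0) (h₂ : 2 * x + 1 ≠ 0) :
    (x + 1) * realCentralBinom (x + 1) = 2 * (2 * x + 1) * realCentralBinom x := by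
  have h₃ : 2 * x + 1 + 1 ≠ 0 := by
    rw [show 2 * x + 1 + 1 = 2 * (x + 1) by ring]
    exact mul_ne_zero two_ne_zero h₁
  rw [realCentralBinom, realCentralBinom, show 2 * (x + 1) + 1 = 2 * x + 1 + 1 + 1 by ring,
    Gamma_add_one h₃, Gamma_add_one h₂, Gamma_add_one h₁]
  field_simp
  ring

theorem realCentralBinom_pos {x : ℝ} (hx : -(1 / 2) < x) : 0 < realCentralBinom x :=
  div_pos (Gamma_pos_of_pos (by linarith)) (pow_pos (Gamma_pos_of_pos (by linarith)) 2)

theorem realCentralBinom_half : realCentralBinom (1 / 2) = 4 / π := by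
  have hGamma : Gamma (1 / 2 + 1) = √π / 2 := by
    rw [Gamma_add_one (by norm_num), Gamma_one_half_eq]
    ring
  rw [realCentralBinom, hGamma, show (2 : ℝ) * (1 / 2) + 1 = 2 by norm_num, Gamma_two, div_pow,
    sq_sqrt pi_pos.le, one_div_div]
  norm_num

theorem wallisIntegral_mul_realCentralBinom (n : ℕ) :
    wallisIntegral n * ((n + 1) / 2 * realCentralBinom ((n + 1) / 2)) = 2 ^ (n + 1) := by
  induction n using Nat.twoStepInduction with
  | zero =>
    rw [Nat.cast_zero, zero_add, zero_add, wallisIntegral_zero, realCentralBinom_half]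
    field_simp
    norm_num
  | one =>
    have hB : realCentralBinom 1 = 2 := by simpa [Nat.centralBinom] using realCentralBinom_natCast 1
    norm_num [wallisIntegral_one, hB]
  | more n ih _ =>
    have hW := wallisIntegral_add_two n
    have hB := realCentralBinom_add_one (x := ((n : ℝ) + 1) / 2) (by positivity) (by positivity)
    rw [show (((n + 2 : ℕ) : ℝ) + 1) / 2 = (n + 1) / 2 + 1 by push_cast; ring, hB]
    linear_combination 2 * realCentralBinom ((n + 1) / 2) * hW + 4 * ih

theorem wallisIntegral_mul_pow_mul_rpow (n : ℕ) (s z : ℝ) :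
    wallisIntegral n * (z ^ (n + 1) * (((n + 1) / 2 : ℝ) ^ (s - 1))⁻¹) =
      (2 * z) ^ (n + 1) / (realCentralBinom ((n + 1) / 2) * ((n + 1) / 2) ^ s) := by
  have hx : (0 : ℝ) < (n + 1) / 2 := by positivity
  have hB : 0 < realCentralBinom ((n + 1) / 2) := realCentralBinom_pos (by linarith)
  have hrpow : (0 : ℝ) < ((n + 1) / 2) ^ (s - 1) := rpow_pos_of_pos hx _
  have hs : ((n + 1) / 2 : ℝ) ^ s = ((n + 1) / 2) ^ (s - 1) * ((n + 1) / 2) := by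
    rw [← rpow_add_one hx.ne', sub_add_cancel]
  rw [hs, mul_pow, ← wallisIntegral_mul_realCentralBinom]
  generalize ((n + 1) / 2 : ℝ) ^ (s - 1) = p at *
  field_simp

/-! ### The logarithmic substitution -/

/-- The base `-2 log (sin (θ / 2) / sin (σ / 2))` of the power in the shifted log-sine integral. -/
noncomputable def logSineRatio (σ θ : ℝ) : ℝ :=
  -2 * log (sin (θ / 2) / sin (σ / 2))

section LogSineRatio

variable {σ θ : ℝ}

theorem sin_half_pos (h₀ : 0 < θ) (h : θ < 2 * π) : 0 < sin (θ / 2) :=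
  sin_pos_of_pos_of_lt_pi (by linarith) (by linarith)

theorem cos_half_pos (h₀ : -π < θ) (h : θ < π) : 0 < cos (θ / 2) :=
  cos_pos_of_mem_Ioo ⟨by linarith, by linarith⟩

theorem hasDerivAt_logSineRatio (hσ : sin (σ / 2) ≠ 0) (hθ : sin (θ / 2) ≠ 0) :
    HasDerivAt (logSineRatio σ) (-(cos (θ / 2) / sin (θ / 2))) θ := by
  have hsin := (((hasDerivAt_id θ).div_const 2).sin.div_const (sin (σ / 2)))
  refine ((hsin.log (div_ne_zero hθ hσ)).const_mul (-2)).congr_deriv ?_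
  simp only [id_eq]
  field_simp

theorem hasDerivWithinAt_logSineRatio_Ioo (hσ : σ ≤ π) (hθ : θ ∈ Ioo 0 σ) :
    HasDerivWithinAt (logSineRatio σ) (-(cos (θ / 2) / sin (θ / 2))) (Ioo 0 σ) θ :=
  (hasDerivAt_logSineRatio (sin_half_pos (hθ.1.trans hθ.2) (by linarith [pi_pos])).ne'
    (sin_half_pos hθ.1 (by linarith [hθ.2, pi_pos])).ne').hasDerivWithinAt

theorem exp_neg_logSineRatio_div_two (h : 0 < sin (θ / 2) / sin (σ / 2)) :
    exp (-(logSineRatio σ θ / 2)) = sin (θ / 2) / sin (σ / 2) := by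
  rw [logSineRatio, show -(-2 * log (sin (θ / 2) / sin (σ / 2)) / 2) =
    log (sin (θ / 2) / sin (σ / 2)) by ring, exp_log h]

theorem antitoneOn_logSineRatio (hσ₀ : 0 < σ) (hσ : σ < 2 * π) :
    AntitoneOn (logSineRatio σ) (Ioc 0 π) := by
  intro α hα β hβ hαβ
  have hσ' := sin_half_pos hσ₀ hσ
  have hα' := sin_half_pos hα.1 (by linarith [hα.2, pi_pos])
  have hsin : sin (α / 2) ≤ sin (β / 2) :=
    sin_le_sin_of_le_of_le_pi_div_two (by linarith [hα.1, pi_pos]) (by linarith [hβ.2])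
      (by linarith)
  have hlog := log_le_log (div_pos hα' hσ') (div_le_div_of_nonneg_right hsin hσ'.le)
  rw [logSineRatio, logSineRatio]
  linarith

theorem antitoneOn_logSineRatio_Ioo (hσ₀ : 0 < σ) (hσ : σ ≤ π) :
    AntitoneOn (logSineRatio σ) (Ioo 0 σ) :=
  (antitoneOn_logSineRatio hσ₀ (by linarith [pi_pos])).mono fun _ hθ ↦ ⟨hθ.1, hθ.2.le.trans hσ⟩

theorem logSineRatio_pos (hσ : σ ≤ π) (hθ : θ ∈ Ioo 0 σ) : 0 < logSineRatio σ θ := by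
  have hθ' := sin_half_pos hθ.1 (by linarith [hθ.2, pi_pos])
  have hσ' := sin_half_pos (hθ.1.trans hθ.2) (by linarith [pi_pos])
  have hsin : sin (θ / 2) < sin (σ / 2) :=
    sin_lt_sin_of_lt_of_le_pi_div_two (by linarith [hθ.1, pi_pos]) (by linarith)
      (by linarith [hθ.2])
  rw [logSineRatio]
  linarith [log_neg (div_pos hθ' hσ') ((div_lt_one hσ').2 hsin)]

theorem logSineRatio_two_mul_arcsin {u : ℝ} (hσ : 0 < sin (σ / 2)) (hu : 0 < u) :
    logSineRatio σ (2 * arcsin (sin (σ / 2) * exp (-(u / 2)))) = u := by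
  have hexp : exp (-(u / 2)) ≤ 1 := exp_le_one_iff.2 (by linarith)
  have hle : sin (σ / 2) * exp (-(u / 2)) ≤ 1 :=
    mul_le_one₀ (sin_le_one _) (exp_pos _).le hexp
  have hpos : 0 < sin (σ / 2) * exp (-(u / 2)) := by positivity
  rw [logSineRatio, mul_div_cancel_left₀ _ two_ne_zero, sin_arcsin (by linarith) hle,
    mul_div_cancel_left₀ _ hσ.ne', log_exp]
  ring

theorem image_logSineRatio_Ioo (hσ₀ : 0 < σ) (hσ : σ ≤ π) :
    logSineRatio σ '' Ioo 0 σ = Ioi 0 := by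
  have hσ' := sin_half_pos hσ₀ (by linarith [pi_pos])
  refine subset_antisymm (image_subset_iff.2 fun θ hθ ↦ logSineRatio_pos hσ hθ) fun u hu ↦ ?_
  have hexp : exp (-(u / 2)) < 1 := exp_lt_one_iff.2 (by linarith [mem_Ioi.1 hu])
  have hpos : 0 < arcsin (sin (σ / 2) * exp (-(u / 2))) := arcsin_pos.2 (by positivity)
  have hlt : arcsin (sin (σ / 2) * exp (-(u / 2))) < σ / 2 :=
    (arcsin_lt_iff_lt_sin' ⟨by linarith, by linarith⟩).2 (mul_lt_of_lt_one_right hσ' hexp)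
  exact ⟨_, ⟨by linarith, by linarith⟩, logSineRatio_two_mul_arcsin hσ' hu⟩

end LogSineRatio

/-! ### Termwise integration -/

section Moments

variable {σ s : ℝ}

-- `- -` and `s - 1 - 1` are the forms given by antitone substitution and by the Gamma integral.
theorem neg_deriv_logSineRatio_smul_rpow_mul_exp {θ : ℝ} (hσ : σ ≤ π) (hθ : θ ∈ Ioo 0 σ) (n : ℕ) :
    (- -(cos (θ / 2) / sin (θ / 2))) • (sin (σ / 2) ^ (n + 1) *
        (logSineRatio σ θ ^ (s - 1 - 1) * exp (-((n + 1) / 2 * logSineRatio σ θ)))) =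
      sin (θ / 2) ^ n * cos (θ / 2) * logSineRatio σ θ ^ (s - 2) := by
  have hσ' := sin_half_pos (hθ.1.trans hθ.2) (by linarith [pi_pos])
  have hθ' := sin_half_pos hθ.1 (by linarith [hθ.2, pi_pos])
  have hexp : exp (-((n + 1) / 2 * logSineRatio σ θ)) =
      (sin (θ / 2) / sin (σ / 2)) ^ (n + 1) := by
    rw [← exp_neg_logSineRatio_div_two (div_pos hθ' hσ'), ← exp_nat_mul]
    congr 1
    push_cast
    ring
  rw [hexp, div_pow, show s - 1 - 1 = s - 2 by ring, neg_neg, smul_eq_mul]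
  field_simp
  ring

theorem integrableOn_rpow_mul_exp_neg_mul_Ioi {p r : ℝ} (hp : -1 < p) (hr : 0 < r) :
    IntegrableOn (fun u ↦ u ^ p * exp (-(r * u))) (Ioi 0) := by
  simpa using integrableOn_rpow_mul_exp_neg_mul_rpow hp one_pos hr

theorem integrableOn_sin_pow_mul_cos_mul_logSineRatio_rpow (hσ₀ : 0 < σ) (hσ : σ ≤ π) (hs : 1 < s)
    (n : ℕ) :
    IntegrableOn (fun θ ↦ sin (θ / 2) ^ n * cos (θ / 2) * logSineRatio σ θ ^ (s - 2))
      (Ioo 0 σ) := by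
  have hGamma : IntegrableOn (fun u ↦ sin (σ / 2) ^ (n + 1) *
      (u ^ (s - 1 - 1) * exp (-(((n : ℝ) + 1) / 2 * u)))) (logSineRatio σ '' Ioo 0 σ) := by
    rw [image_logSineRatio_Ioo hσ₀ hσ]
    exact (integrableOn_rpow_mul_exp_neg_mul_Ioi (by linarith) (by positivity)).const_mul _
  rw [integrableOn_image_iff_integrableOn_deriv_smul_of_antitoneOn measurableSet_Ioo
    (fun _ ↦ hasDerivWithinAt_logSineRatio_Ioo hσ) (antitoneOn_logSineRatio_Ioo hσ₀ hσ)] at hGamma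
  exact hGamma.congr_fun (fun θ hθ ↦ neg_deriv_logSineRatio_smul_rpow_mul_exp hσ hθ n)
    measurableSet_Ioo

theorem integral_sin_pow_mul_cos_mul_logSineRatio_rpow (hσ₀ : 0 < σ) (hσ : σ ≤ π) (hs : 1 < s)
    (n : ℕ) :
    ∫ θ in Ioo 0 σ, sin (θ / 2) ^ n * cos (θ / 2) * logSineRatio σ θ ^ (s - 2) =
      sin (σ / 2) ^ (n + 1) * (((n + 1) / 2 : ℝ) ^ (s - 1))⁻¹ * Gamma (s - 1) := by
  calc
    _ = ∫ u in logSineRatio σ '' Ioo 0 σ,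
        sin (σ / 2) ^ (n + 1) * (u ^ (s - 1 - 1) * exp (-(((n : ℝ) + 1) / 2 * u))) := by
      rw [integral_image_eq_integral_deriv_smul_of_antitoneOn measurableSet_Ioo
        (fun _ ↦ hasDerivWithinAt_logSineRatio_Ioo hσ) (antitoneOn_logSineRatio_Ioo hσ₀ hσ)]
      exact setIntegral_congr_fun measurableSet_Ioo
        fun θ hθ ↦ (neg_deriv_logSineRatio_smul_rpow_mul_exp hσ hθ n).symm
    _ = _ := by
      rw [image_logSineRatio_Ioo hσ₀ hσ, integral_const_mul,
        integral_rpow_mul_exp_neg_mul_Ioi (by linarith) (by positivity), one_div,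
        inv_rpow (by positivity), mul_assoc]

theorem intervalIntegrable_logSineRatio_rpow (hσ₀ : 0 < σ) (hσ : σ < π) (hs : 1 < s) :
    IntervalIntegrable (fun θ ↦ logSineRatio σ θ ^ (s - 2)) volume 0 σ := by
  have hcos : ∀ θ ∈ uIcc 0 σ, cos (θ / 2) ≠ 0 := fun θ hθ ↦ by
    rw [uIcc_of_le hσ₀.le] at hθ
    exact (cos_half_pos (by linarith [hθ.1, pi_pos]) (by linarith [hθ.2])).ne'
  have hcosMul :
      IntervalIntegrable (fun θ ↦ cos (θ / 2) * logSineRatio σ θ ^ (s - 2)) volume 0 σ := by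
    rw [intervalIntegrable_iff_integrableOn_Ioo_of_le hσ₀.le]
    simpa using integrableOn_sin_pow_mul_cos_mul_logSineRatio_rpow hσ₀ hσ.le hs 0
  -- As `σ < π`, the factor `cos (θ / 2)` of the zeroth moment can be divided out.
  have hinv : ContinuousOn (fun θ ↦ (cos (θ / 2))⁻¹) (uIcc 0 σ) :=
    ContinuousOn.inv₀ (by fun_prop) hcos
  refine (hcosMul.continuousOn_mul hinv).congr fun θ hθ ↦ ?_
  exact inv_mul_cancel_left₀ (hcos θ (uIoc_subset_uIcc hθ)) _

theorem summable_abs_mul_pow_succ_mul_rpow {ι : Type*} {a : ι → ℝ} {k : ι → ℕ} {p z : ℝ}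
    (hp : 0 ≤ p) (h : Summable fun i ↦ a i * z ^ k i) :
    Summable fun i ↦ |a i| * (z ^ (k i + 1) * (((k i + 1) / 2 : ℝ) ^ p)⁻¹) := by
  refine (h.abs.mul_right (|z| * ((1 / 2 : ℝ) ^ p)⁻¹)).of_norm_bounded fun i ↦ ?_
  have hpos : (0 : ℝ) < ((k i + 1) / 2 : ℝ) ^ p := by positivity
  have hle : (((k i + 1) / 2 : ℝ) ^ p)⁻¹ ≤ ((1 / 2 : ℝ) ^ p)⁻¹ := by
    gcongr
    linarith [(k i).cast_nonneg (α := ℝ)]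
  calc
    _ = |a i| * |z| ^ k i * (|z| * (((k i + 1) / 2 : ℝ) ^ p)⁻¹) := by
      rw [norm_mul, norm_mul, norm_of_nonneg (inv_nonneg.2 hpos.le), norm_eq_abs, norm_eq_abs,
        abs_abs, abs_pow]
      ring
    _ ≤ |a i| * |z| ^ k i * (|z| * ((1 / 2 : ℝ) ^ p)⁻¹) := by gcongr
    _ = _ := by rw [abs_mul, abs_pow]

theorem integral_norm_mul_sin_pow_mul_cos_mul_logSineRatio_rpow (hσ₀ : 0 < σ) (hσ : σ ≤ π)
    (hs : 1 < s) (c : ℝ) (n : ℕ) :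
    ∫ θ in Ioo 0 σ, ‖c * (sin (θ / 2) ^ n * cos (θ / 2) * logSineRatio σ θ ^ (s - 2))‖ =
      |c| * (sin (σ / 2) ^ (n + 1) * (((n + 1) / 2 : ℝ) ^ (s - 1))⁻¹ * Gamma (s - 1)) := by
  rw [← integral_sin_pow_mul_cos_mul_logSineRatio_rpow hσ₀ hσ hs, ← integral_const_mul]
  refine setIntegral_congr_fun measurableSet_Ioo fun θ hθ ↦ ?_
  have hsin := sin_half_pos hθ.1 (by linarith [hθ.2, pi_pos])
  have hcos := cos_half_pos (θ := θ) (by linarith [hθ.1, pi_pos]) (by linarith [hθ.2])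
  have hlog := logSineRatio_pos hσ hθ
  simp only [norm_mul, norm_eq_abs]
  rw [abs_of_pos (pow_pos hsin n), abs_of_pos hcos, abs_of_pos (rpow_pos_of_pos hlog _)]

theorem hasSum_integral_mul_logSineRatio_rpow {ι : Type*} [Countable ι] {a : ι → ℝ} {k : ι → ℕ}
    {F : ℝ → ℝ} (hσ₀ : 0 < σ) (hσ : σ < π) (hs : 1 < s)
    (hF : ∀ θ ∈ Ioc 0 σ, HasSum (fun i ↦ a i * (sin (θ / 2) ^ k i * cos (θ / 2))) (F θ)) :
    HasSum
      (fun i ↦ a i * (sin (σ / 2) ^ (k i + 1) * (((k i + 1) / 2 : ℝ) ^ (s - 1))⁻¹ * Gamma (s - 1)))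
      (∫ θ in 0..σ, F θ * logSineRatio σ θ ^ (s - 2)) := by
  -- Convergence at the endpoint `θ = σ` is what makes the integrals of the norms summable.
  have hcos : cos (σ / 2) ≠ 0 := (cos_half_pos (by linarith [pi_pos]) hσ).ne'
  have hseries : Summable fun i ↦ a i * sin (σ / 2) ^ k i := by
    simpa [← mul_assoc, hcos] using (hF σ ⟨hσ₀, le_rfl⟩).summable.mul_right (cos (σ / 2))⁻¹
  have hnorm : Summable fun i ↦ |a i| *
      (sin (σ / 2) ^ (k i + 1) * (((k i + 1) / 2 : ℝ) ^ (s - 1))⁻¹ * Gamma (s - 1)) := by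
    simpa only [mul_assoc] using
      (summable_abs_mul_pow_succ_mul_rpow (sub_nonneg.2 hs.le) hseries).mul_right (Gamma (s - 1))
  have hsum := hasSum_integral_of_summable_integral_norm
    (μ := volume.restrict (Ioo 0 σ))
    (F := fun i θ ↦ a i * (sin (θ / 2) ^ k i * cos (θ / 2) * logSineRatio σ θ ^ (s - 2)))
    (fun i ↦ (integrableOn_sin_pow_mul_cos_mul_logSineRatio_rpow hσ₀ hσ.le hs (k i)).const_mul _)
    (by simpa only [integral_norm_mul_sin_pow_mul_cos_mul_logSineRatio_rpow hσ₀ hσ.le hs]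
      using hnorm)
  simp only [integral_const_mul,
    integral_sin_pow_mul_cos_mul_logSineRatio_rpow hσ₀ hσ.le hs] at hsum
  rw [intervalIntegral.integral_of_le hσ₀.le, integral_Ioc_eq_integral_Ioo]
  convert! hsum using 1
  refine setIntegral_congr_fun measurableSet_Ioo fun θ hθ ↦ ?_
  simp only [← mul_assoc] at hF ⊢
  exact ((hF θ (Ioo_subset_Ioc_self hθ)).mul_right _).tsum_eq.symm

theorem hasSum_integral_of_hasSum_wallisIntegral {ι : Type*} [Countable ι] {k : ι → ℕ}
    {F : ℝ → ℝ} (hσ₀ : 0 < σ) (hσ : σ < π) (hs : 1 < s)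
    (hF : ∀ θ ∈ Ioc 0 σ,
      HasSum (fun i ↦ wallisIntegral (k i) * (sin (θ / 2) ^ k i * cos (θ / 2))) (F θ)) :
    HasSum
      (fun i ↦ (2 * sin (σ / 2)) ^ (k i + 1) /
        (realCentralBinom ((k i + 1) / 2) * ((k i + 1) / 2) ^ s))
      (1 / Gamma (s - 1) * ∫ θ in 0..σ, F θ * logSineRatio σ θ ^ (s - 2)) := by
  have hGamma : Gamma (s - 1) ≠ 0 := (Gamma_pos_of_pos (sub_pos.2 hs)).ne'
  convert! (hasSum_integral_mul_logSineRatio_rpow hσ₀ hσ hs hF).mul_left (1 / Gamma (s - 1))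
    using 2 with i
  rw [← wallisIntegral_mul_pow_mul_rpow]
  field_simp

theorem hasSum_zetaCB (hσ₀ : 0 < σ) (hσ : σ < π) (hs : 1 < s) :
    HasSum
      (fun m : ℕ ↦ (2 * sin (σ / 2)) ^ (2 * (m + 1)) /
        ((Nat.choose (2 * (m + 1)) (m + 1) : ℝ) * ((m : ℝ) + 1) ^ s))
      (1 / Gamma (s - 1) * ∫ θ in 0..σ, θ * logSineRatio σ θ ^ (s - 2)) := by
  convert! hasSum_integral_of_hasSum_wallisIntegral (F := fun θ ↦ θ)
    (k := fun m : ℕ ↦ 2 * m + 1) hσ₀ hσ hs fun θ hθ ↦ ?_ using 2 with m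
  · have hx : (((2 * m + 1 : ℕ) : ℝ) + 1) / 2 = (m + 1 : ℕ) := by
      push_cast
      ring
    rw [hx, realCentralBinom_natCast, Nat.centralBinom]
    push_cast
    rfl
  · convert! (hasSum_wallisIntegral_even_and_odd (φ := θ / 2) ?_).2 using 1
    · ring
    · rw [abs_of_pos (half_pos hθ.1)]
      linarith [hθ.2]

theorem hasSum_etaCB (hσ₀ : 0 < σ) (hσ : σ < π) (hs : 1 < s) :
    HasSum
      (fun m : ℕ ↦ (2 * sin (σ / 2)) ^ (2 * m + 1) / (halfBinom m * ((m : ℝ) + 1 / 2) ^ s))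
      (1 / Gamma (s - 1) * ∫ θ in 0..σ, π * logSineRatio σ θ ^ (s - 2)) := by
  convert! hasSum_integral_of_hasSum_wallisIntegral (F := fun _ ↦ π)
    (k := fun m : ℕ ↦ 2 * m) hσ₀ hσ hs fun θ hθ ↦ ?_ using 2 with m
  · have hx : (((2 * m : ℕ) : ℝ) + 1) / 2 = m + 1 / 2 := by
      push_cast
      ring
    rw [hx, realCentralBinom_natCast_add_half]
  · refine (hasSum_wallisIntegral_even_and_odd ?_).1
    rw [abs_of_pos (half_pos hθ.1)]
    linarith [hθ.2]

end Moments

open Real in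
theorem shifted_log_sine_eq_zetaCB_sub_etaCB (σ s : ℝ) (hσ0 : 0 < σ) (hσπ : σ < π)
    (hs : 1 < s) :
    (1 / Real.Gamma (s - 1)) *
        ∫ θ in (0 : ℝ)..σ,
          (θ - σ) * (-2 * Real.log (Real.sin (θ / 2) / Real.sin (σ / 2))) ^ (s - 2) =
      (∑' m : ℕ, (2 * Real.sin (σ / 2)) ^ (2 * (m + 1)) /
          ((Nat.choose (2 * (m + 1)) (m + 1) : ℝ) * ((m : ℝ) + 1) ^ s)) -
        σ / π * ∑' m : ℕ, (2 * Real.sin (σ / 2)) ^ (2 * m + 1) /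
          (halfBinom m * ((m : ℝ) + 1 / 2) ^ s) := by
  have hU := intervalIntegrable_logSineRatio_rpow hσ0 hσπ hs
  have hθU : IntervalIntegrable (fun θ ↦ θ * logSineRatio σ θ ^ (s - 2)) volume 0 σ :=
    hU.continuousOn_mul continuousOn_id
  have hsplit : ∫ θ in 0..σ, (θ - σ) * logSineRatio σ θ ^ (s - 2) =
      (∫ θ in 0..σ, θ * logSineRatio σ θ ^ (s - 2)) -
        σ * ∫ θ in 0..σ, logSineRatio σ θ ^ (s - 2) := by
    simp only [sub_mul]
    rw [intervalIntegral.integral_sub hθU (hU.const_mul σ), intervalIntegral.integral_const_mul]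
  rw [(hasSum_zetaCB hσ0 hσπ hs).tsum_eq, (hasSum_etaCB hσ0 hσπ hs).tsum_eq,
    intervalIntegral.integral_const_mul]
  calc
    _ = 1 / Gamma (s - 1) * ∫ θ in 0..σ, (θ - σ) * logSineRatio σ θ ^ (s - 2) := rfl
    _ = _ := by
      rw [hsplit]
      field_simp
end

section
/- Define SLs(−n; σ) for integer n ≥ −1 and 0 < σ < π via the analytic continuation SLs(s;σ) := ζ_CB(s; sin(σ/2)) − (σ/π)η_CB(s; sin(σ/2)) (series converging for all s). Then SLs(−n; σ) = x·p_n(x)/(2^n(1−x)^{n+1}) where x = sin²(σ/2) and p_n is Lehmer's polynomial. -/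
open Polynomial

/-!
The operator `f ↦ (y * f)' / 2` multiplies the coefficient of `y ^ m` by `(m + 1) / 2`. Iterating it
`n + 1` times on the power series of `(a + b * arcsin y) / √(1 - y ^ 2)` gives, up to a factor `y`,
combinations of the two series in the theorem: the central binomials produce the odd powers and, by
the duplication formula for `Γ`, their half-integer analogues produce the even ones. Iterating it on
the closed form `(a + b * t) / cos t`, where `y = sin t`, reproduces Lehmer's recurrences and gives
`b` times a term in `p_n` plus `a + b * t` times a term in `q_n`. The coefficient `-σ / π`
corresponds to `a = -σ`, `b = 2`, for which `a + b * t` vanishes at `t = σ / 2`, so that only `p_n`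
survives.
-/

section PowerSeries

variable {𝕜 : Type*} [RCLike 𝕜] {c : ℕ → 𝕜} {w : 𝕜}

theorem exists_norm_mul_pow_le_of_summable (hw : Summable fun n ↦ c n * w ^ n) :
    ∃ M, ∀ n, ‖c n‖ * ‖w‖ ^ n ≤ M := by
  obtain ⟨M, hM⟩ := hw.tendsto_atTop_zero.norm.bddAbove_range
  exact ⟨M, fun n ↦ by simpa using hM ⟨n, rfl⟩⟩

theorem summable_norm_mul_natCast_mul_pow_pred (hw : Summable fun n ↦ c n * w ^ n) {r : ℝ}
    (hr : 0 < r) (hrw : r < ‖w‖) : Summable fun n ↦ ‖c n‖ * (n * r ^ (n - 1)) := by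
  obtain ⟨M, hM⟩ := exists_norm_mul_pow_le_of_summable hw
  have hw₀ : 0 < ‖w‖ := hr.trans hrw
  have hratio : ‖r / ‖w‖‖ < 1 := by
    rwa [Real.norm_of_nonneg (by positivity), div_lt_one hw₀]
  refine .of_nonneg_of_le (fun n ↦ by positivity) (fun n ↦ ?_)
    ((summable_pow_mul_geometric_of_norm_lt_one 1 hratio).mul_left (M / r))
  rcases n with _ | n
  · simp
  calc ‖c (n + 1)‖ * (↑(n + 1) * r ^ n)
      = ‖c (n + 1)‖ * ‖w‖ ^ (n + 1) / r * (↑(n + 1) ^ 1 * (r / ‖w‖) ^ (n + 1)) := by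
        rw [div_pow, Nat.cast_add_one, pow_succ r]
        field_simp
    _ ≤ M / r * (↑(n + 1) ^ 1 * (r / ‖w‖) ^ (n + 1)) := by
        gcongr
        exact hM (n + 1)

theorem hasDerivAt_tsum_mul_pow (hw : Summable fun n ↦ c n * w ^ n) {y : 𝕜} (hy : ‖y‖ < ‖w‖) :
    HasDerivAt (fun z ↦ ∑' n, c n * z ^ n) (∑' n, c n * (n * y ^ (n - 1))) y := by
  obtain ⟨r, hyr, hrw⟩ := exists_between hy
  have hr : 0 < r := (norm_nonneg y).trans_lt hyr
  refine hasDerivAt_tsum_of_isPreconnected (t := Metric.ball 0 r) (y₀ := 0)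
    (summable_norm_mul_natCast_mul_pow_pred hw hr hrw) Metric.isOpen_ball
    (convex_ball 0 r).isPreconnected (fun n z _ ↦ (hasDerivAt_pow n z).const_mul (c n))
    (fun n z hz ↦ ?_) (Metric.mem_ball_self hr) ?_ (by simpa using hyr)
  · rw [norm_mul, norm_mul, norm_pow, RCLike.norm_natCast]
    gcongr
    exact (mem_ball_zero_iff.mp hz).le
  · exact summable_of_ne_finset_zero (s := {0}) fun n hn ↦ by simp_all

end PowerSeries

/-- Taylor coefficients at `0` of `(a + b * arcsin y) / √(1 - y ^ 2)`, the general solution of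
`(1 - y ^ 2) * f' = b + y * f`. The central binomial series has the coefficients with odd index and
its half-integer companion those with even index. -/
noncomputable def arcsinCoeff (a b : ℝ) : ℕ → ℝ
  | 0 => a
  | 1 => b
  | n + 2 => (n + 1) / (n + 2) * arcsinCoeff a b n

/-- The power series with coefficients `arcsinCoeff a b n * ((n + 1) / 2) ^ k`, obtained from the
one with `k = 0` by applying `f ↦ (y * f)' / 2` repeatedly. -/
noncomputable def arcsinSeries (a b : ℝ) (k : ℕ) (y : ℝ) : ℝ :=
  ∑' n : ℕ, arcsinCoeff a b n * ((n + 1) / 2) ^ k * y ^ n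

section ArcsinSeries

open Set

variable (a b : ℝ) {y t : ℝ}

theorem abs_arcsinCoeff_le : ∀ n, |arcsinCoeff a b n| ≤ max |a| |b|
  | 0 => le_max_left _ _
  | 1 => le_max_right _ _
  | n + 2 => by
    have hratio : ((n : ℝ) + 1) / (n + 2) ≤ 1 := by
      rw [div_le_one (by positivity)]
      linarith
    rw [arcsinCoeff, abs_mul, abs_of_nonneg (by positivity : 0 ≤ ((n : ℝ) + 1) / (n + 2))]
    exact (mul_le_of_le_one_left (abs_nonneg _) hratio).trans (abs_arcsinCoeff_le n)

theorem summable_arcsinSeries (k : ℕ) (hy : |y| < 1) :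
    Summable fun n : ℕ ↦ arcsinCoeff a b n * ((n + 1) / 2) ^ k * y ^ n := by
  refine .of_norm_bounded_eventually_nat
    ((summable_pow_mul_geometric_of_norm_lt_one k (r := |y|) (by simpa using hy)).mul_left
      (max |a| |b|)) ?_
  filter_upwards [Filter.eventually_ge_atTop 1] with n hn
  have hn' : (1 : ℝ) ≤ n := mod_cast hn
  rw [Real.norm_eq_abs, abs_mul, abs_mul, abs_pow y,
    abs_of_nonneg (by positivity : 0 ≤ (((n : ℝ) + 1) / 2) ^ k), mul_assoc]
  gcongr
  · exact abs_arcsinCoeff_le a b n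
  · linarith

theorem hasDerivAt_arcsinSeries (k : ℕ) (hy : |y| < 1) :
    HasDerivAt (arcsinSeries a b k)
      (∑' n : ℕ, arcsinCoeff a b n * ((n + 1) / 2) ^ k * (n * y ^ (n - 1))) y := by
  obtain ⟨w, hyw, hw⟩ := exists_between hy
  have habs : |w| = w := abs_of_pos ((abs_nonneg y).trans_lt hyw)
  exact hasDerivAt_tsum_mul_pow (summable_arcsinSeries a b k (y := w) (by rwa [habs]))
    (by simpa [habs] using hyw)

theorem two_mul_arcsinSeries_succ (k : ℕ) (hy : |y| < 1) :
    2 * arcsinSeries a b (k + 1) y =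
      arcsinSeries a b k y + y * deriv (arcsinSeries a b k) y := by
  have hterm (n : ℕ) : y * (arcsinCoeff a b n * ((n + 1) / 2) ^ k * (n * y ^ (n - 1))) =
      2 * (arcsinCoeff a b n * ((n + 1) / 2) ^ (k + 1) * y ^ n) -
        arcsinCoeff a b n * ((n + 1) / 2) ^ k * y ^ n := by
    rcases n with _ | n
    · rw [Nat.cast_zero]; ring
    · rw [Nat.add_sub_cancel]; push_cast; ring
  rw [(hasDerivAt_arcsinSeries a b k hy).deriv, ← tsum_mul_left, tsum_congr hterm,
    ((summable_arcsinSeries a b (k + 1) hy).mul_left 2).tsum_sub (summable_arcsinSeries a b k hy),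
    tsum_mul_left]
  simp only [arcsinSeries, add_sub_cancel]

theorem deriv_arcsinSeries_zero (hy : |y| < 1) :
    deriv (arcsinSeries a b 0) y = b + 2 * y * arcsinSeries a b 1 y := by
  let term (n : ℕ) : ℝ := arcsinCoeff a b n * ((n + 1) / 2) ^ 0 * (n * y ^ (n - 1))
  have hterm (n : ℕ) :
      term (n + 2) = 2 * y * (arcsinCoeff a b n * ((n + 1) / 2) ^ 1 * y ^ n) := by
    simp only [term, arcsinCoeff, Nat.add_succ_sub_one]
    push_cast
    field_simp
    ring
  have htail : Summable fun n ↦ term (n + 2) := by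
    simpa only [hterm] using (summable_arcsinSeries a b 1 hy).mul_left (2 * y)
  have hhead : ∑ n ∈ Finset.range 2, term n = b := by
    simp [term, arcsinCoeff, Finset.sum_range_succ]
  calc deriv (arcsinSeries a b 0) y = ∑' n, term n := (hasDerivAt_arcsinSeries a b 0 hy).deriv
    _ = ∑ n ∈ Finset.range 2, term n + ∑' n, term (n + 2) := (htail.sum_add_tsum_nat_add').symm
    _ = b + 2 * y * arcsinSeries a b 1 y := by
      rw [hhead, tsum_congr hterm, tsum_mul_left, arcsinSeries]

theorem abs_sin_lt_one_of_mem_Ioo (ht : t ∈ Ioo (-(Real.pi / 2)) (Real.pi / 2)) :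
    |Real.sin t| < 1 := by
  have hcos : 0 < Real.cos t := Real.cos_pos_of_mem_Ioo ht
  rw [← sq_lt_one_iff_abs_lt_one, Real.sin_sq]
  linarith [pow_pos hcos 2]

theorem one_sub_sq_mul_deriv_arcsinSeries_zero (hy : |y| < 1) :
    (1 - y ^ 2) * deriv (arcsinSeries a b 0) y = b + y * arcsinSeries a b 0 y := by
  linear_combination deriv_arcsinSeries_zero a b hy +
    y * two_mul_arcsinSeries_succ a b 0 hy

theorem hasDerivAt_arcsinSeries_sin (k : ℕ) (ht : t ∈ Ioo (-(Real.pi / 2)) (Real.pi / 2)) :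
    HasDerivAt (fun t ↦ arcsinSeries a b k (Real.sin t))
      (deriv (arcsinSeries a b k) (Real.sin t) * Real.cos t) t :=
  (hasDerivAt_arcsinSeries a b k (abs_sin_lt_one_of_mem_Ioo ht)).differentiableAt.hasDerivAt.comp t
    (Real.hasDerivAt_sin t)

theorem hasDerivAt_sin_mul_arcsinSeries_sin (k : ℕ)
    (ht : t ∈ Ioo (-(Real.pi / 2)) (Real.pi / 2)) :
    HasDerivAt (fun t ↦ Real.sin t * arcsinSeries a b k (Real.sin t))
      (2 * Real.cos t * arcsinSeries a b (k + 1) (Real.sin t)) t := by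
  refine ((Real.hasDerivAt_sin t).fun_mul (hasDerivAt_arcsinSeries_sin a b k ht)).congr_deriv ?_
  linear_combination
    -Real.cos t * two_mul_arcsinSeries_succ a b k (abs_sin_lt_one_of_mem_Ioo ht)

theorem arcsinSeries_zero_sin (ht : t ∈ Ioo (-(Real.pi / 2)) (Real.pi / 2)) :
    arcsinSeries a b 0 (Real.sin t) = (a + b * t) / Real.cos t := by
  have hderiv : ∀ u ∈ Ioo (-(Real.pi / 2)) (Real.pi / 2),
      HasDerivAt (fun u ↦ arcsinSeries a b 0 (Real.sin u) * Real.cos u - b * u) 0 u := by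
    intro u hu
    refine (((hasDerivAt_arcsinSeries_sin a b 0 hu).fun_mul (Real.hasDerivAt_cos u)).fun_sub
      ((hasDerivAt_id' u).const_mul b)).congr_deriv ?_
    linear_combination one_sub_sq_mul_deriv_arcsinSeries_zero a b
      (abs_sin_lt_one_of_mem_Ioo hu) +
        deriv (arcsinSeries a b 0) (Real.sin u) * Real.sin_sq_add_cos_sq u
  have hconst := isOpen_Ioo.is_const_of_deriv_eq_zero isPreconnected_Ioo
    (fun u hu ↦ (hderiv u hu).differentiableAt.differentiableWithinAt)
    (fun u hu ↦ (hderiv u hu).deriv) ht (y := 0) (by simp [Real.pi_pos])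
  have hzero : arcsinSeries a b 0 0 = a := by
    rw [arcsinSeries, tsum_eq_single 0 fun n hn ↦ by simp [hn]]
    simp [arcsinCoeff]
  simp only [Real.sin_zero, Real.cos_zero, hzero] at hconst
  rw [eq_div_iff (Real.cos_pos_of_mem_Ioo ht).ne']
  linarith

end ArcsinSeries

/-- The value at `x = sin² t` of `p(x) / (2 (1 - x)) ^ k`. -/
noncomputable def sinSqQuotient (p : ℤ[X]) (k : ℕ) (t : ℝ) : ℝ :=
  aeval (Real.sin t ^ 2) p / (2 * Real.cos t ^ 2) ^ k

section ClosedForm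

open Set

variable {t : ℝ}

theorem hasDerivAt_sinSqQuotient (p : ℤ[X]) (k : ℕ) (ht : Real.cos t ≠ 0) :
    HasDerivAt (sinSqQuotient p k)
      (4 * Real.sin t * Real.cos t *
        sinSqQuotient ((1 - X) * derivative p + (k : ℤ[X]) * p) (k + 1) t) t := by
  have hnum : HasDerivAt (fun t ↦ aeval (Real.sin t ^ 2) p)
      (aeval (Real.sin t ^ 2) (derivative p) * (2 * Real.sin t * Real.cos t)) t := by
    refine ((p.hasDerivAt_aeval (Real.sin t ^ 2)).comp t
      ((Real.hasDerivAt_sin t).fun_pow 2)).congr_deriv ?_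
    simp
  have hden := (((Real.hasDerivAt_cos t).fun_pow 2).const_mul 2).fun_pow k
  refine (hnum.fun_div hden (by positivity)).congr_deriv ?_
  simp only [sinSqQuotient, map_add, map_mul, map_sub, map_one, map_natCast, aeval_X,
    ← Real.cos_sq']
  rcases k with _ | k
  · simp only [Nat.cast_zero, zero_mul, add_zero, zero_add, pow_zero, pow_one]; field_simp; ring
  · rw [Nat.add_sub_cancel]; push_cast; field_simp; ring

theorem hasDerivAt_sin_mul_sinSqQuotient_lehmerQ (k : ℕ) (ht : Real.cos t ≠ 0) :
    HasDerivAt (fun t ↦ Real.sin t * (sinSqQuotient (lehmerQ k) k t / Real.cos t))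
      (2 * Real.cos t * (sinSqQuotient (lehmerQ (k + 1)) (k + 1) t / Real.cos t)) t := by
  refine ((Real.hasDerivAt_sin t).fun_mul ((hasDerivAt_sinSqQuotient (lehmerQ k) k ht).fun_div
    (Real.hasDerivAt_cos t) ht)).congr_deriv ?_
  simp only [sinSqQuotient, lehmerQ, map_add, map_mul, map_sub, map_one, map_natCast, map_ofNat,
    aeval_X, ← Real.cos_sq', pow_succ _ k]
  field_simp
  linear_combination 2 * aeval (Real.sin t ^ 2) (lehmerQ k) * Real.sin_sq_add_cos_sq t

theorem hasDerivAt_sin_mul_sin_mul_sinSqQuotient_lehmerP (k : ℕ) (ht : Real.cos t ≠ 0) :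
    HasDerivAt (fun t ↦ Real.sin t * (Real.sin t * sinSqQuotient (lehmerP k) k t))
      (2 * Real.cos t * (Real.sin t * sinSqQuotient (lehmerP (k + 1)) (k + 1) t) -
        Real.sin t * (sinSqQuotient (lehmerQ k) k t / Real.cos t)) t := by
  refine ((Real.hasDerivAt_sin t).fun_mul ((Real.hasDerivAt_sin t).fun_mul
    (hasDerivAt_sinSqQuotient (lehmerP k) k ht))).congr_deriv ?_
  simp only [sinSqQuotient, lehmerP, map_add, map_mul, map_sub, map_one, map_natCast, map_ofNat,
    aeval_X, ← Real.cos_sq', pow_succ _ k]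
  field_simp
  linear_combination
    4 * Real.sin t * aeval (Real.sin t ^ 2) (lehmerP k) * Real.sin_sq_add_cos_sq t

theorem arcsinSeries_sin (a b : ℝ) (k : ℕ) (ht : t ∈ Ioo (-(Real.pi / 2)) (Real.pi / 2)) :
    arcsinSeries a b k (Real.sin t) =
      b * (Real.sin t * sinSqQuotient (lehmerP k) k t) +
        (a + b * t) * (sinSqQuotient (lehmerQ k) k t / Real.cos t) := by
  induction k generalizing t with
  | zero => simp [arcsinSeries_zero_sin a b ht, sinSqQuotient, lehmerP, lehmerQ, div_eq_mul_inv]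
  | succ k ih =>
    have hcos : Real.cos t ≠ 0 := (Real.cos_pos_of_mem_Ioo ht).ne'
    have hclosed := ((hasDerivAt_sin_mul_sin_mul_sinSqQuotient_lehmerP k hcos).const_mul b).fun_add
      ((((hasDerivAt_id' t).const_mul b).const_add a).fun_mul
        (hasDerivAt_sin_mul_sinSqQuotient_lehmerQ k hcos))
    have heq : (fun u ↦ b * (Real.sin u * (Real.sin u * sinSqQuotient (lehmerP k) k u)) +
        (a + b * u) * (Real.sin u * (sinSqQuotient (lehmerQ k) k u / Real.cos u))) =ᶠ[nhds t]
        fun u ↦ Real.sin u * arcsinSeries a b k (Real.sin u) := by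
      filter_upwards [isOpen_Ioo.mem_nhds ht] with u hu
      rw [ih hu]
      ring
    have hseries := (hasDerivAt_sin_mul_arcsinSeries_sin a b k ht).congr_of_eventuallyEq heq
    refine mul_left_cancel₀ (mul_ne_zero two_ne_zero hcos) ?_
    linear_combination hseries.unique hclosed

end ClosedForm

section CentralBinomialSeries

open Real

theorem halfBinom_eq (m : ℕ) :
    halfBinom m = 4 ^ (2 * m + 1) / (π * (2 * m + 1) * Nat.centralBinom m) := by
  have hGamma : Gamma (2 * m + 2) = (2 * m + 1).factorial := by
    rw [← Gamma_nat_eq_factorial]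
    push_cast
    ring_nf
  have hdup : m.factorial * Gamma (m + 3 / 2) =
      (2 * m + 1).factorial * √π / 2 ^ (2 * m + 1) := by
    have h := Gamma_mul_Gamma_add_half (m + 1)
    rw [Gamma_nat_eq_factorial, show (m : ℝ) + 1 + 1 / 2 = m + 3 / 2 by ring,
      show 2 * ((m : ℝ) + 1) = 2 * m + 2 by ring, hGamma,
      show 1 - (2 * (m : ℝ) + 2) = -↑(2 * m + 1) by push_cast; ring, rpow_neg zero_le_two,
      rpow_natCast] at h
    rw [h]
    ring
  have hcentral : (Nat.centralBinom m : ℝ) = (2 * m).factorial / m.factorial ^ 2 := by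
    rw [Nat.centralBinom_eq_two_mul_choose, Nat.cast_choose ℝ (by lia), two_mul,
      Nat.add_sub_cancel, sq]
  rw [halfBinom, hGamma, hcentral, eq_div_of_mul_eq (by positivity) ((mul_comm _ _).trans hdup)]
  simp only [div_pow, mul_pow, sq_sqrt pi_nonneg, Nat.factorial_succ]
  push_cast
  field_simp
  rw [← pow_mul, mul_comm, pow_mul]
  norm_num

theorem arcsinCoeff_two_mul (a b : ℝ) (m : ℕ) :
    arcsinCoeff a b (2 * m) = a * (Nat.centralBinom m / 4 ^ m) := by
  induction m with
  | zero => simp [arcsinCoeff]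
  | succ m ih =>
    have hrec : ((m : ℝ) + 1) * Nat.centralBinom (m + 1) = 2 * (2 * m + 1) * Nat.centralBinom m :=
      mod_cast Nat.succ_mul_centralBinom_succ m
    rw [mul_add_one, arcsinCoeff, ih, pow_succ]
    push_cast
    field_simp
    linear_combination (-2) * a * hrec

theorem arcsinCoeff_two_mul_add_one (a b : ℝ) (m : ℕ) :
    arcsinCoeff a b (2 * m + 1) =
      b * (4 ^ (m + 1) / (2 * (m + 1) * Nat.centralBinom (m + 1))) := by
  induction m with
  | zero => norm_num [arcsinCoeff, Nat.centralBinom]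
  | succ m ih =>
    have hrec : ((m : ℝ) + 1 + 1) * Nat.centralBinom (m + 1 + 1) =
        2 * (2 * (m + 1) + 1) * Nat.centralBinom (m + 1) :=
      mod_cast Nat.succ_mul_centralBinom_succ (m + 1)
    have hpos (m : ℕ) : (Nat.centralBinom m : ℝ) ≠ 0 := mod_cast Nat.centralBinom_ne_zero m
    have := hpos (m + 1)
    have := hpos (m + 1 + 1)
    rw [show 2 * (m + 1) + 1 = 2 * m + 1 + 2 by ring, arcsinCoeff, ih, pow_succ _ (m + 1)]
    push_cast
    field_simp
    linear_combination 2 * b * (m + 1) * hrec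

theorem centralBinomial_term_eq (a b y : ℝ) (k m : ℕ) :
    b / 2 * ((2 * y) ^ (2 * (m + 1)) * ((m : ℝ) + 1) ^ ((k : ℤ) - 1) /
        (2 * (m + 1)).choose (m + 1)) =
      y * (arcsinCoeff a b (2 * m + 1) * ((↑(2 * m + 1) + 1) / 2) ^ k * y ^ (2 * m + 1)) := by
  have hindex : ((↑(2 * m + 1) : ℝ) + 1) / 2 = m + 1 := by push_cast; ring
  have hfour : (2 : ℝ) ^ (2 * (m + 1)) = 4 ^ (m + 1) := by rw [pow_mul]; norm_num
  have hpos : (0 : ℝ) < Nat.centralBinom (m + 1) := mod_cast Nat.centralBinom_pos _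
  rw [hindex, arcsinCoeff_two_mul_add_one, ← Nat.centralBinom_eq_two_mul_choose,
    zpow_sub_one₀ (by positivity), zpow_natCast, mul_pow, hfour]
  field_simp
  ring

theorem halfBinomial_term_eq (a b y : ℝ) (k m : ℕ) :
    a / π * ((2 * y) ^ (2 * m + 1) * ((m : ℝ) + 1 / 2) ^ ((k : ℤ) - 1) / halfBinom m) =
      y * (arcsinCoeff a b (2 * m) * ((↑(2 * m) + 1) / 2) ^ k * y ^ (2 * m)) := by
  have hindex : ((↑(2 * m) : ℝ) + 1) / 2 = m + 1 / 2 := by push_cast; ring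
  have hfour : (4 : ℝ) ^ (2 * m + 1) = 2 * 2 ^ (2 * m + 1) * 4 ^ m := by
    have htwo : (2 : ℝ) ^ (2 * m) = 4 ^ m := by rw [pow_mul]; norm_num
    rw [pow_succ, pow_succ, htwo, two_mul, pow_add]
    ring
  have hpos : (0 : ℝ) < Nat.centralBinom m := mod_cast Nat.centralBinom_pos _
  rw [hindex, arcsinCoeff_two_mul, halfBinom_eq, hfour, zpow_sub_one₀ (by positivity), zpow_natCast,
    mul_pow]
  field_simp
  ring

theorem centralBinomial_add_halfBinomial_eq (a b : ℝ) {y : ℝ} (k : ℕ) (hy : |y| < 1) :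
    b / 2 * (∑' m : ℕ, (2 * y) ^ (2 * (m + 1)) * ((m : ℝ) + 1) ^ ((k : ℤ) - 1) /
          (2 * (m + 1)).choose (m + 1)) +
        a / π * ∑' m : ℕ, (2 * y) ^ (2 * m + 1) * ((m : ℝ) + 1 / 2) ^ ((k : ℤ) - 1) /
          halfBinom m =
      y * arcsinSeries a b k y := by
  let term (n : ℕ) : ℝ := arcsinCoeff a b n * ((n + 1) / 2) ^ k * y ^ n
  have hsum : Summable term := summable_arcsinSeries a b k hy
  have heven : Summable fun m ↦ term (2 * m) := hsum.comp_injective fun _ _ h ↦ by lia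
  have hodd : Summable fun m ↦ term (2 * m + 1) := hsum.comp_injective fun _ _ h ↦ by lia
  calc
    _ = (∑' m, y * term (2 * m + 1)) + ∑' m, y * term (2 * m) := by
      rw [← tsum_mul_left, ← tsum_mul_left]
      exact congrArg₂ _ (tsum_congr (centralBinomial_term_eq a b y k))
        (tsum_congr (halfBinomial_term_eq a b y k))
    _ = y * ∑' n, term n := by
      rw [tsum_mul_left, tsum_mul_left, ← tsum_even_add_odd heven hodd]
      ring

end CentralBinomialSeries

open Real in
theorem shifted_log_sine_neg_integer_general (n : ℤ) (hn : -1 ≤ n) (σ : ℝ) (hσ : |σ| < π) :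
    (∑' m : ℕ, (2 * Real.sin (σ / 2)) ^ (2 * (m + 1)) * ((m : ℝ) + 1) ^ n /
          (Nat.choose (2 * (m + 1)) (m + 1) : ℝ)) -
        σ / π * ∑' m : ℕ, (2 * Real.sin (σ / 2)) ^ (2 * m + 1) * ((m : ℝ) + 1 / 2) ^ n /
          halfBinom m =
      Real.sin (σ / 2) ^ 2 * aeval (Real.sin (σ / 2) ^ 2) (lehmerP (n + 1).toNat) /
        ((2 : ℝ) ^ n * (1 - Real.sin (σ / 2) ^ 2) ^ (n + 1)) := by
  obtain ⟨k, rfl⟩ : ∃ k : ℕ, n = k - 1 := ⟨(n + 1).toNat, by lia⟩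
  obtain ⟨hσl, hσr⟩ := abs_lt.mp hσ
  have hθ : σ / 2 ∈ Set.Ioo (-(π / 2)) (π / 2) := ⟨by linarith, by linarith⟩
  have hcos : cos (σ / 2) ≠ 0 := (cos_pos_of_mem_Ioo hθ).ne'
  have hseries := centralBinomial_add_halfBinomial_eq (-σ) 2 k (abs_sin_lt_one_of_mem_Ioo hθ)
  have hshift : -σ + 2 * (σ / 2) = 0 := by ring
  rw [div_self two_ne_zero, one_mul, neg_div, neg_mul, ← sub_eq_add_neg,
    arcsinSeries_sin (-σ) 2 k hθ, hshift, zero_mul, add_zero] at hseries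
  rw [hseries, sinSqQuotient, sub_add_cancel, Int.toNat_natCast, zpow_natCast,
    zpow_sub_one₀ two_ne_zero, zpow_natCast, ← cos_sq', mul_pow]
  field_simp

open Real in
theorem shifted_log_sine_neg_integer (n : ℤ) (hn : -1 ≤ n) (σ : ℝ) (hσ0 : 0 < σ)
    (hσπ : σ < π) :
    (∑' m : ℕ, (2 * Real.sin (σ / 2)) ^ (2 * (m + 1)) * ((m : ℝ) + 1) ^ n /
          (Nat.choose (2 * (m + 1)) (m + 1) : ℝ)) -
        σ / π * ∑' m : ℕ, (2 * Real.sin (σ / 2)) ^ (2 * m + 1) * ((m : ℝ) + 1 / 2) ^ n /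
          halfBinom m =
      Real.sin (σ / 2) ^ 2 * aeval (Real.sin (σ / 2) ^ 2) (lehmerP (n + 1).toNat) /
        ((2 : ℝ) ^ n * (1 - Real.sin (σ / 2) ^ 2) ^ (n + 1)) := by
  exact shifted_log_sine_neg_integer_general n hn σ (abs_lt.mpr ⟨by linarith, hσπ⟩)
end
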